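/- Let s > 1/2 and C₁, C₂ > 0. There exists a constant K > 0, depending only on s, C₁ and C₂, such that the following holds. Let d ≥ 4, 0 < σ ≤ C₁, F ∈ ℝ^{d×d} orthogonal, and for each class c ∈ {1, …, C} let ν_c = ∑_{k=1}^{K_c} π_{c,k} N(μ_{c,k}, σ² I_d) be a Gaussian mixture with π_{c,k} ≥ 0, ∑_k π_{c,k} = 1, class mean μ_c = ∑_k π_{c,k} μ_{c,k}, and suppose every mixture center satisfies the decay condition C₁ r^{−s} ≤ |(F μ_{c,k})^{(r)}| ≤ C₂ r^{−s} for all 1 ≤ r ≤ d. Let Φ(x) = Fᵀ ρ_t(F x) with soft-threshold λ = σ √(2 log d), let μ̄_c = ∫ Φ(x) dν_c(x), let Tr(Σ̄_W) = (1/C) ∑_c ∫ ‖Φ(x) − μ̄_c‖² dν_c(x), and let Tr(Σ_M) = (1/C) ∑_{c,k} π_{c,k} ‖μ_{c,k} − μ_c‖². Then Tr(Σ̄_W) ≤ 2 Tr(Σ_M) + K σ^{2 − 1/s} log d. -/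

import Mathlib

open Matrix MeasureTheory ProbabilityTheory

/-- The Gaussian measure `N(m, σ² I_d)` on `ℝ^d`, as a product of one-dimensional
Gaussian measures. -/
noncomputable def gaussPi (d : ℕ) (m : Fin d → ℝ) (σ : ℝ) : Measure (Fin d → ℝ) :=
  Measure.pi fun i => gaussianReal (m i) (Real.toNNReal (σ ^ 2))

/-- Soft-thresholding with threshold `lam`: `ρ_t(u) = sign(u) · max(|u| − lam, 0)`. -/
noncomputable def softThresh (lam u : ℝ) : ℝ :=
  Real.sign u * max (|u| - lam) 0

/-- `z` has sorted coefficients (by decreasing absolute value) satisfying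
`c₁ r^{−s} ≤ |z^{(r)}| ≤ c₂ r^{−s}` for all `1 ≤ r ≤ d` (here ranks are `0`-indexed,
so rank `r : Fin d` corresponds to `r + 1`). -/
def sortedDecay (s c₁ c₂ : ℝ) {d : ℕ} (z : Fin d → ℝ) : Prop :=
  ∃ e : Equiv.Perm (Fin d),
    (∀ r r' : Fin d, r ≤ r' → |z (e r')| ≤ |z (e r)|) ∧
    ∀ r : Fin d, c₁ * ((r : ℝ) + 1) ^ (-s) ≤ |z (e r)| ∧ |z (e r)| ≤ c₂ * ((r : ℝ) + 1) ^ (-s)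

/-!
Bias-variance and `‖x + y‖² ≤ 2‖x‖² + 2‖y‖²` give, for every point `a`,
`∫ ‖Φ - μ̄‖² dν ≤ 2 ∑ₖ πₖ ‖μₖ - a‖² + 2 maxₖ 𝔼ₖ‖Φ - μₖ‖²`, so everything rests on the denoising risk
at a single centre. There the oracle inequality for soft-thresholding at the universal level
`σ √(2 log p)` bounds each coordinate by `min (θ², σ²)` up to a logarithm, and the decay of the
coefficients gives `∑ min (θᵣ², σ²) ≲ σ^(2 - 1/s)`: at most about `σ^(-1/s)` coefficients
exceed `σ`, and the squares of the others sum to the same order.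
-/

section SoftThreshold

variable {lam : ℝ}

lemma softThresh_zero_right (lam : ℝ) : softThresh lam 0 = 0 := by
  rw [softThresh, Real.sign_zero, zero_mul]

lemma softThresh_eq_max_sub_max (hlam : 0 ≤ lam) (u : ℝ) :
    softThresh lam u = max (u - lam) 0 - max (-u - lam) 0 := by
  rcases lt_trichotomy u 0 with hu | rfl | hu
  · rw [softThresh, Real.sign_of_neg hu, abs_of_neg hu, max_eq_right (a := u - lam) (by linarith)]
    ring
  · rw [softThresh_zero_right, neg_zero, sub_self]
  · rw [softThresh, Real.sign_of_pos hu, abs_of_pos hu, max_eq_right (a := -u - lam) (by linarith)]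
    ring

lemma abs_softThresh_sub_self_le (hlam : 0 ≤ lam) (u : ℝ) : |softThresh lam u - u| ≤ lam := by
  rw [softThresh_eq_max_sub_max hlam, abs_le]
  constructor <;> grind

lemma softThresh_zero_left (u : ℝ) : softThresh 0 u = u :=
  sub_eq_zero.1 (abs_nonpos_iff.1 (abs_softThresh_sub_self_le le_rfl u))

lemma lipschitzWith_softThresh (hlam : 0 ≤ lam) : LipschitzWith 1 (softThresh lam) := by
  refine LipschitzWith.of_dist_le_mul fun u v => ?_
  rw [Real.dist_eq, Real.dist_eq, NNReal.coe_one, one_mul, softThresh_eq_max_sub_max hlam,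
    softThresh_eq_max_sub_max hlam, abs_le]
  constructor <;> grind

lemma abs_softThresh_sub_softThresh_le (hlam : 0 ≤ lam) (u v : ℝ) :
    |softThresh lam u - softThresh lam v| ≤ |u - v| := by
  simpa [Real.dist_eq] using (lipschitzWith_softThresh hlam).dist_le_mul u v

lemma sq_max_zero_le_exp {t : ℝ} (ht : 0 < t) (u : ℝ) :
    max u 0 ^ 2 ≤ 2 / t ^ 2 * Real.exp (t * u) := by
  rcases le_total u 0 with hu | hu
  · rw [max_eq_right hu, zero_pow two_ne_zero]
    positivity
  · have hquad := Real.quadratic_le_exp_of_nonneg (mul_nonneg ht.le hu)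
    rw [max_eq_left hu, div_mul_eq_mul_div, le_div_iff₀ (by positivity)]
    nlinarith [mul_nonneg ht.le hu]

lemma sq_softThresh_le_exp (hlam : 0 ≤ lam) {t : ℝ} (ht : 0 < t) (u : ℝ) :
    softThresh lam u ^ 2 ≤
      2 / t ^ 2 * Real.exp (-(t * lam)) * (Real.exp (t * u) + Real.exp (-t * u)) := by
  have hpos := sq_max_zero_le_exp ht (u - lam)
  have hneg := sq_max_zero_le_exp ht (-u - lam)
  have hcross : 0 ≤ max (u - lam) 0 * max (-u - lam) 0 := by positivity
  calc softThresh lam u ^ 2 ≤ max (u - lam) 0 ^ 2 + max (-u - lam) 0 ^ 2 := by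
        rw [softThresh_eq_max_sub_max hlam]
        linarith [sub_sq (max (u - lam) 0) (max (-u - lam) 0)]
    _ ≤ 2 / t ^ 2 * Real.exp (t * (u - lam)) + 2 / t ^ 2 * Real.exp (t * (-u - lam)) :=
        add_le_add hpos hneg
    _ = _ := by
        rw [mul_assoc, mul_add (Real.exp _), ← Real.exp_add, ← Real.exp_add, mul_add]
        ring_nf

end SoftThreshold

section ScalarRisk

variable {Ω : Type*} [MeasurableSpace Ω] {P : Measure Ω} {X : Ω → ℝ} {θ σ lam : ℝ}

lemma memLp_softThresh_comp (hlam : 0 ≤ lam) {q : ENNReal} (hX : MemLp X q P) :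
    MemLp (fun ω => softThresh lam (X ω)) q P :=
  (lipschitzWith_softThresh hlam).comp_memLp (softThresh_zero_right lam) hX

lemma integral_sq_softThresh_le {v : NNReal} (hX : HasSubgaussianMGF X v P) (hlam : 0 ≤ lam)
    {t : ℝ} (ht : 0 < t) :
    ∫ ω, softThresh lam (X ω) ^ 2 ∂P ≤ 4 / t ^ 2 * Real.exp (v * t ^ 2 / 2 - t * lam) := by
  have hint := (hX.integrable_exp_mul t).add (hX.integrable_exp_mul (-t))
  calc ∫ ω, softThresh lam (X ω) ^ 2 ∂P
      ≤ ∫ ω, 2 / t ^ 2 * Real.exp (-(t * lam)) *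
          (Real.exp (t * X ω) + Real.exp (-t * X ω)) ∂P :=
        integral_mono (memLp_softThresh_comp hlam (hX.memLp 2)).integrable_sq (hint.const_mul _)
          fun ω => sq_softThresh_le_exp hlam ht (X ω)
    _ = 2 / t ^ 2 * Real.exp (-(t * lam)) * (mgf X P t + mgf X P (-t)) := by
        rw [integral_const_mul, integral_add (hX.integrable_exp_mul t) (hX.integrable_exp_mul (-t))]
        rfl
    _ ≤ 2 / t ^ 2 * Real.exp (-(t * lam)) *
          (Real.exp (v * t ^ 2 / 2) + Real.exp (v * (-t) ^ 2 / 2)) := by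
        gcongr
        exacts [hX.mgf_le t, hX.mgf_le (-t)]
    _ = 4 / t ^ 2 * Real.exp (v * t ^ 2 / 2 - t * lam) := by
        rw [neg_sq, Real.exp_sub, Real.exp_neg]
        ring

lemma integral_sq_le_of_hasSubgaussianMGF (hσ : 0 < σ)
    (hX : HasSubgaussianMGF X (σ ^ 2).toNNReal P) : ∫ ω, X ω ^ 2 ∂P ≤ 8 * σ ^ 2 := by
  have hexp : Real.exp (1 / 2) ≤ 2 := by
    rw [← Real.le_log_iff_exp_le two_pos]
    linarith [Real.log_two_gt_d9]
  have h := integral_sq_softThresh_le hX le_rfl (inv_pos.2 hσ)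
  simp only [softThresh_zero_left] at h
  rw [Real.coe_toNNReal _ (sq_nonneg σ), inv_pow, mul_inv_cancel₀ (by positivity), mul_zero,
    sub_zero, div_inv_eq_mul] at h
  nlinarith [sq_nonneg σ]

variable [IsProbabilityMeasure P]

lemma memLp_of_hasSubgaussianMGF_sub_const {v : NNReal}
    (hX : HasSubgaussianMGF (fun ω => X ω - θ) v P) (q : NNReal) : MemLp X q P := by
  have h := (hX.memLp q).add (memLp_const θ)
  rwa [show (fun ω => X ω - θ) + (fun _ => θ) = X by ext; simp] at h

lemma integral_sq_softThresh_sub_le_threshold (hσ : 0 < σ) (hlam : 0 ≤ lam)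
    (hX : HasSubgaussianMGF (fun ω => X ω - θ) (σ ^ 2).toNNReal P) :
    ∫ ω, (softThresh lam (X ω) - θ) ^ 2 ∂P ≤ 2 * lam ^ 2 + 16 * σ ^ 2 := by
  have hX2 : MemLp X 2 P := memLp_of_hasSubgaussianMGF_sub_const hX 2
  have hnoise := (hX.memLp 2).integrable_sq
  calc ∫ ω, (softThresh lam (X ω) - θ) ^ 2 ∂P
      ≤ ∫ ω, (2 * lam ^ 2 + 2 * (X ω - θ) ^ 2) ∂P := by
        refine integral_mono ((memLp_softThresh_comp hlam hX2).sub (memLp_const θ)).integrable_sq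
          ((integrable_const _).add (hnoise.const_mul 2)) fun ω => ?_
        have hbias := sq_le_sq' (abs_le.1 (abs_softThresh_sub_self_le hlam (X ω))).1
          (abs_le.1 (abs_softThresh_sub_self_le hlam (X ω))).2
        have hsplit := add_sq_le (a := softThresh lam (X ω) - X ω) (b := X ω - θ)
        rw [sub_add_sub_cancel] at hsplit
        simp only
        linarith
    _ = 2 * lam ^ 2 + 2 * ∫ ω, (X ω - θ) ^ 2 ∂P := by
        rw [integral_add (integrable_const _) (hnoise.const_mul 2), integral_const, probReal_univ,
          one_smul, integral_const_mul]
    _ ≤ 2 * lam ^ 2 + 16 * σ ^ 2 := by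
        linarith [integral_sq_le_of_hasSubgaussianMGF hσ hX]

lemma integral_sq_softThresh_sub_le_signal {v : NNReal} (hlam : 0 ≤ lam) {t : ℝ} (ht : 0 < t)
    (hX : HasSubgaussianMGF (fun ω => X ω - θ) v P) :
    ∫ ω, (softThresh lam (X ω) - θ) ^ 2 ∂P ≤
      8 * θ ^ 2 + 8 / t ^ 2 * Real.exp (v * t ^ 2 / 2 - t * lam) := by
  have hX2 : MemLp X 2 P := memLp_of_hasSubgaussianMGF_sub_const hX 2
  have hnoise := (memLp_softThresh_comp hlam (hX.memLp 2)).integrable_sq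
  calc ∫ ω, (softThresh lam (X ω) - θ) ^ 2 ∂P
      ≤ ∫ ω, (8 * θ ^ 2 + 2 * softThresh lam (X ω - θ) ^ 2) ∂P := by
        refine integral_mono ((memLp_softThresh_comp hlam hX2).sub (memLp_const θ)).integrable_sq
          ((integrable_const _).add (hnoise.const_mul 2)) fun ω => ?_
        have hshift : |softThresh lam (X ω) - softThresh lam (X ω - θ)| ≤ |θ| := by
          simpa using abs_softThresh_sub_softThresh_le hlam (X ω) (X ω - θ)
        have hbias : (softThresh lam (X ω) - softThresh lam (X ω - θ) - θ) ^ 2 ≤ 4 * θ ^ 2 := by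
          nlinarith [sq_le_sq.2 hshift,
            sq_nonneg (softThresh lam (X ω) - softThresh lam (X ω - θ) + θ)]
        have hsplit := add_sq_le (a := softThresh lam (X ω) - softThresh lam (X ω - θ) - θ)
          (b := softThresh lam (X ω - θ))
        rw [sub_right_comm, sub_add_cancel] at hsplit
        rw [sub_right_comm] at hbias
        simp only
        linarith
    _ = 8 * θ ^ 2 + 2 * ∫ ω, softThresh lam (X ω - θ) ^ 2 ∂P := by
        rw [integral_add (integrable_const _) (hnoise.const_mul 2), integral_const, probReal_univ,
          one_smul, integral_const_mul]
    _ ≤ 8 * θ ^ 2 + 2 * (4 / t ^ 2 * Real.exp (v * t ^ 2 / 2 - t * lam)) := by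
        gcongr
        exact integral_sq_softThresh_le hX hlam ht
    _ = _ := by ring

theorem integral_sq_softThresh_sub_le_oracle (hσ : 0 < σ) {L : ℝ} (hL : 1 / 2 ≤ L)
    (hX : HasSubgaussianMGF (fun ω => X ω - θ) (σ ^ 2).toNNReal P) :
    ∫ ω, (softThresh (σ * √(2 * L)) (X ω) - θ) ^ 2 ∂P ≤
      36 * L * min (θ ^ 2) (σ ^ 2) + 8 * σ ^ 2 * Real.exp (-L) := by
  have hlam : 0 < σ * √(2 * L) := by positivity
  have hroot : √(2 * L) ^ 2 = 2 * L := Real.sq_sqrt (by linarith)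
  have htail : 0 ≤ 8 * σ ^ 2 * Real.exp (-L) := by positivity
  rcases min_cases (θ ^ 2) (σ ^ 2) with ⟨hmin, -⟩ | ⟨hmin, -⟩ <;> rw [hmin]
  -- `t = lam / σ²` minimises the exponent `σ² t² / 2 - t lam`, with minimum `-L`.
  · have h := integral_sq_softThresh_sub_le_signal hlam.le (t := √(2 * L) / σ) (by positivity) hX
    have hexponent : σ ^ 2 * (√(2 * L) / σ) ^ 2 / 2 - √(2 * L) / σ * (σ * √(2 * L)) = -L := by
      field_simp
      rw [hroot]
      ring
    have hcoeff : 8 / (√(2 * L) / σ) ^ 2 ≤ 8 * σ ^ 2 := by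
      rw [div_pow, hroot, div_div_eq_mul_div]
      exact div_le_self (by positivity) (by linarith)
    rw [Real.coe_toNNReal _ (sq_nonneg σ), hexponent] at h
    nlinarith [sq_nonneg θ, mul_le_mul_of_nonneg_right hcoeff (Real.exp_pos (-L)).le]
  · have h := integral_sq_softThresh_sub_le_threshold hσ hlam.le hX
    rw [mul_pow, hroot] at h
    nlinarith [sq_nonneg σ]

end ScalarRisk

section Subgaussian

lemma hasSubgaussianMGF_mono {Ω : Type*} [MeasurableSpace Ω] {P : Measure Ω} {X : Ω → ℝ}
    {v v' : NNReal} (hX : HasSubgaussianMGF X v P) (hv : v ≤ v') : HasSubgaussianMGF X v' P where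
  integrable_exp_mul := hX.integrable_exp_mul
  mgf_le t := (hX.mgf_le t).trans (by gcongr)

lemma hasSubgaussianMGF_sub_gaussianReal (m : ℝ) (v : NNReal) :
    HasSubgaussianMGF (fun y => y - m) v (gaussianReal m v) := by
  have hmap : (gaussianReal m v).map (fun y => y - m) = gaussianReal 0 v := by
    rw [gaussianReal_map_sub_const, sub_self]
  refine (HasSubgaussianMGF.id_map_iff (by fun_prop)).1 (hmap ▸ ⟨fun t => ?_, fun t => ?_⟩)
  · exact integrable_exp_mul_gaussianReal t
  · simp [mgf_id_gaussianReal]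

lemma hasSubgaussianMGF_dotProduct_sub_pi {κ : Type*} [Fintype κ] {P : κ → Measure ℝ}
    [∀ j, IsProbabilityMeasure (P j)] {m : κ → ℝ} {v : NNReal}
    (hP : ∀ j, HasSubgaussianMGF (fun y => y - m j) v (P j)) (a : κ → ℝ) :
    HasSubgaussianMGF (fun x => a ⬝ᵥ (x - m)) ((a ⬝ᵥ a).toNNReal * v) (Measure.pi P) := by
  have hcoord (j : κ) : HasSubgaussianMGF (fun x : κ → ℝ => a j * (x j - m j))
      ((a j * a j).toNNReal * v) (Measure.pi P) := by
    have hmarginal : HasSubgaussianMGF (fun x : κ → ℝ => x j - m j) v (Measure.pi P) :=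
      .of_map (X := fun y => y - m j) (measurable_pi_apply j).aemeasurable
        ((measurePreserving_eval P j).map_eq ▸ hP j)
    rw [← sq, Real.toNNReal_of_nonneg (sq_nonneg (a j))]
    exact hmarginal.const_mul (a j)
  have hindep : iIndepFun (fun j (x : κ → ℝ) => a j * (x j - m j)) (Measure.pi P) :=
    iIndepFun_pi (X := fun j y => a j * (y - m j)) fun j => by fun_prop
  rw [dotProduct, Real.toNNReal_sum_of_nonneg fun j _ => mul_self_nonneg (a j), Finset.sum_mul]
  exact HasSubgaussianMGF.sum_of_iIndepFun hindep fun j _ => hcoord j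

instance isProbabilityMeasure_gaussPi (d : ℕ) (m : Fin d → ℝ) (σ : ℝ) :
    IsProbabilityMeasure (gaussPi d m σ) := by
  unfold gaussPi
  infer_instance

end Subgaussian

section ParsevalFrame

variable {ι κ : Type*} [Fintype ι] [Fintype κ] [DecidableEq κ] {F : Matrix ι κ ℝ}

lemma dotProduct_transpose_mulVec_self_le (hF : Fᵀ * F = 1) (v : ι → ℝ) :
    (Fᵀ *ᵥ v) ⬝ᵥ (Fᵀ *ᵥ v) ≤ v ⬝ᵥ v := by
  have hcross : v ⬝ᵥ (F *ᵥ (Fᵀ *ᵥ v)) = (Fᵀ *ᵥ v) ⬝ᵥ (Fᵀ *ᵥ v) := by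
    rw [dotProduct_mulVec, ← mulVec_transpose]
  have hproj : (F *ᵥ (Fᵀ *ᵥ v)) ⬝ᵥ (F *ᵥ (Fᵀ *ᵥ v)) = (Fᵀ *ᵥ v) ⬝ᵥ (Fᵀ *ᵥ v) := by
    rw [dotProduct_mulVec, ← mulVec_transpose, mulVec_mulVec, hF, one_mulVec]
  have hres : 0 ≤ (v - F *ᵥ (Fᵀ *ᵥ v)) ⬝ᵥ (v - F *ᵥ (Fᵀ *ᵥ v)) :=
    Finset.sum_nonneg fun i _ => mul_self_nonneg _
  rw [sub_dotProduct, dotProduct_sub, dotProduct_sub, dotProduct_comm (F *ᵥ (Fᵀ *ᵥ v)) v, hcross,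
    hproj] at hres
  linarith

lemma row_dotProduct_self_le_one (hF : Fᵀ * F = 1) (i : ι) : F i ⬝ᵥ F i ≤ 1 := by
  classical
  simpa [row] using dotProduct_transpose_mulVec_self_le hF (Pi.single i 1)

lemma hasSubgaussianMGF_mulVec_sub_gaussPi {d : ℕ} {F : Matrix ι (Fin d) ℝ} (hF : Fᵀ * F = 1)
    (m : Fin d → ℝ) (σ : ℝ) (i : ι) :
    HasSubgaussianMGF (fun x => (F *ᵥ (x - m)) i) (σ ^ 2).toNNReal (gaussPi d m σ) := by
  refine hasSubgaussianMGF_mono (hasSubgaussianMGF_dotProduct_sub_pi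
    (fun j => hasSubgaussianMGF_sub_gaussianReal (m j) _) (F i)) ?_
  exact mul_le_of_le_one_left zero_le (Real.toNNReal_le_one.2 (row_dotProduct_self_le_one hF i))

end ParsevalFrame

section MeanSqError

variable {Ω κ : Type*} [MeasurableSpace Ω] [Fintype κ]

/-- The mean squared Euclidean distance `∫ ‖f - a‖² dP` of a random vector `f` to a point `a`. -/
noncomputable def meanSqError (f : Ω → κ → ℝ) (a : κ → ℝ) (P : Measure Ω) : ℝ :=
  ∫ x, ∑ i, (f x i - a i) ^ 2 ∂P

lemma integrable_sum_sq_sub {f : Ω → κ → ℝ} {P : Measure Ω} [IsFiniteMeasure P]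
    (hf : ∀ i, MemLp (fun x => f x i) 2 P) (a : κ → ℝ) :
    Integrable (fun x => ∑ i, (f x i - a i) ^ 2) P :=
  integrable_finsetSum _ fun i _ => ((hf i).sub (memLp_const (a i))).integrable_sq

lemma meanSqError_eq_sum {f : Ω → κ → ℝ} {P : Measure Ω} [IsFiniteMeasure P]
    (hf : ∀ i, MemLp (fun x => f x i) 2 P) (a : κ → ℝ) :
    meanSqError f a P = ∑ i, ∫ x, (f x i - a i) ^ 2 ∂P :=
  integral_finsetSum _ fun i _ => ((hf i).sub (memLp_const (a i))).integrable_sq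

lemma meanSqError_integral_le {f : Ω → κ → ℝ} {P : Measure Ω} [IsProbabilityMeasure P]
    (hf : ∀ i, MemLp (fun x => f x i) 2 P) (a : κ → ℝ) :
    meanSqError f (∫ x, f x ∂P) P ≤ meanSqError f a P := by
  rw [meanSqError_eq_sum hf, meanSqError_eq_sum hf]
  refine Finset.sum_le_sum fun i _ => ?_
  have hmeas : AEStronglyMeasurable (fun x => f x i) P := (hf i).aestronglyMeasurable
  rw [eval_integral (fun i => (hf i).integrable one_le_two) i,
    ← variance_eq_integral hmeas.aemeasurable, ← variance_sub_const hmeas (a i)]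
  exact variance_le_expectation_sq (hmeas.sub aestronglyMeasurable_const)

lemma meanSqError_le_two_mul_add {f : Ω → κ → ℝ} {P : Measure Ω} [IsProbabilityMeasure P]
    (hf : ∀ i, MemLp (fun x => f x i) 2 P) (a b : κ → ℝ) :
    meanSqError f a P ≤ 2 * ∑ i, (b i - a i) ^ 2 + 2 * meanSqError f b P := by
  have hb := (integrable_sum_sq_sub hf b).const_mul 2
  calc meanSqError f a P
      ≤ ∫ x, (2 * ∑ i, (b i - a i) ^ 2 + 2 * ∑ i, (f x i - b i) ^ 2) ∂P := by
        refine integral_mono (integrable_sum_sq_sub hf a) ((integrable_const _).add hb) fun x => ?_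
        simp only [Finset.mul_sum, ← Finset.sum_add_distrib]
        refine Finset.sum_le_sum fun i _ => ?_
        have hsplit := add_sq_le (a := b i - a i) (b := f x i - b i)
        rw [add_comm, sub_add_sub_cancel] at hsplit
        linarith
    _ = 2 * ∑ i, (b i - a i) ^ 2 + 2 * meanSqError f b P := by
        rw [integral_add (integrable_const _) hb, integral_const, probReal_univ, one_smul,
          integral_const_mul, meanSqError]

end MeanSqError

section Mixture

variable {Ω κ η : Type*} [MeasurableSpace Ω] [Fintype κ] [Fintype η] {w : η → ℝ}
  {P : η → Measure Ω}

/-- The mixture `∑ₖ wₖ Pₖ` of measures with real weights; negative weights count as zero. -/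
noncomputable def mixture (w : η → ℝ) (P : η → Measure Ω) : Measure Ω :=
  ∑ k, ENNReal.ofReal (w k) • P k

lemma isProbabilityMeasure_mixture [∀ k, IsProbabilityMeasure (P k)] (hw : ∀ k, 0 ≤ w k)
    (hw1 : ∑ k, w k = 1) : IsProbabilityMeasure (mixture w P) := by
  constructor
  simp only [mixture, Measure.coe_finsetSum, Finset.sum_apply, Measure.smul_apply, measure_univ,
    smul_eq_mul, mul_one]
  rw [← ENNReal.ofReal_sum_of_nonneg fun k _ => hw k, hw1, ENNReal.ofReal_one]

lemma integrable_mixture {g : Ω → ℝ} (hg : ∀ k, Integrable g (P k)) :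
    Integrable g (mixture w P) :=
  integrable_finsetSum_measure.2 fun k _ => (hg k).smul_measure ENNReal.ofReal_ne_top

lemma integral_mixture (hw : ∀ k, 0 ≤ w k) {g : Ω → ℝ} (hg : ∀ k, Integrable g (P k)) :
    ∫ x, g x ∂mixture w P = ∑ k, w k * ∫ x, g x ∂P k := by
  rw [mixture, integral_finsetSum_measure fun k _ => (hg k).smul_measure ENNReal.ofReal_ne_top]
  refine Finset.sum_congr rfl fun k _ => ?_
  rw [integral_smul_measure, ENNReal.toReal_ofReal (hw k), smul_eq_mul]

lemma memLp_two_mixture {g : Ω → ℝ} (hgm : Measurable g) (hg : ∀ k, MemLp g 2 (P k)) :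
    MemLp g 2 (mixture w P) :=
  (memLp_two_iff_integrable_sq hgm.aestronglyMeasurable).2
    (integrable_mixture fun k => (hg k).integrable_sq)

theorem meanSqError_integral_mixture_le [∀ k, IsProbabilityMeasure (P k)] (hw : ∀ k, 0 ≤ w k)
    (hw1 : ∑ k, w k = 1) {f : Ω → κ → ℝ} (hfm : Measurable f)
    (hf : ∀ k i, MemLp (fun x => f x i) 2 (P k)) {b : η → κ → ℝ} {R : ℝ}
    (hR : ∀ k, meanSqError f (b k) (P k) ≤ R) (a : κ → ℝ) :
    meanSqError f (∫ x, f x ∂mixture w P) (mixture w P) ≤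
      2 * ∑ k, w k * ∑ i, (b k i - a i) ^ 2 + 2 * R := by
  have := isProbabilityMeasure_mixture (P := P) hw hw1
  calc meanSqError f (∫ x, f x ∂mixture w P) (mixture w P) ≤ meanSqError f a (mixture w P) :=
        meanSqError_integral_le (fun i => memLp_two_mixture (hfm.eval) fun k => hf k i) a
    _ = ∑ k, w k * meanSqError f a (P k) :=
        integral_mixture hw fun k => integrable_sum_sq_sub (hf k) a
    _ ≤ ∑ k, w k * (2 * ∑ i, (b k i - a i) ^ 2 + 2 * R) := by
        gcongr with k
        · exact hw k
        · linarith [meanSqError_le_two_mul_add (hf k) a (b k), hR k]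
    _ = 2 * ∑ k, w k * ∑ i, (b k i - a i) ^ 2 + 2 * R := by
        simp only [mul_add, Finset.sum_add_distrib, ← Finset.sum_mul, hw1, one_mul, Finset.mul_sum]
        simp only [mul_left_comm]

end Mixture

section FrameThresholding

variable {ι κ : Type*} [Fintype κ] {lam σ : ℝ} {F : Matrix ι κ ℝ} {m : κ → ℝ}
  {P : Measure (κ → ℝ)} [IsProbabilityMeasure P]

lemma memLp_softThresh_mulVec {v : NNReal} (hlam : 0 ≤ lam)
    (hP : ∀ i, HasSubgaussianMGF (fun x => (F *ᵥ (x - m)) i) v P) (i : ι) :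
    MemLp (fun x => softThresh lam ((F *ᵥ x) i)) 2 P := by
  simp only [mulVec_sub, Pi.sub_apply] at hP
  exact memLp_softThresh_comp hlam (memLp_of_hasSubgaussianMGF_sub_const (hP i) 2)

variable [Fintype ι]

/-- Soft-thresholding in the frame whose analysis operator is `F`: the rows of `F` are the frame
vectors, and reconstruction is by `Fᵀ`, as for a Parseval frame. -/
noncomputable def frameThresh (F : Matrix ι κ ℝ) (lam : ℝ) (x : κ → ℝ) : κ → ℝ :=
  Fᵀ *ᵥ fun i => softThresh lam ((F *ᵥ x) i)

lemma continuous_frameThresh (F : Matrix ι κ ℝ) (hlam : 0 ≤ lam) :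
    Continuous (frameThresh F lam) := by
  have := (lipschitzWith_softThresh hlam).continuous
  unfold frameThresh
  fun_prop

lemma memLp_frameThresh {v : NNReal} (hlam : 0 ≤ lam)
    (hP : ∀ i, HasSubgaussianMGF (fun x => (F *ᵥ (x - m)) i) v P) (j : κ) :
    MemLp (fun x => frameThresh F lam x j) 2 P :=
  memLp_finsetSum _ fun i _ => (memLp_softThresh_mulVec hlam hP i).const_mul (Fᵀ j i)

variable [DecidableEq κ]

lemma sum_sq_frameThresh_sub_le (hF : Fᵀ * F = 1) (lam : ℝ) (x m : κ → ℝ) :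
    ∑ j, (frameThresh F lam x j - m j) ^ 2 ≤
      ∑ i, (softThresh lam ((F *ᵥ x) i) - (F *ᵥ m) i) ^ 2 := by
  have herr : frameThresh F lam x - m =
      Fᵀ *ᵥ ((fun i => softThresh lam ((F *ᵥ x) i)) - F *ᵥ m) := by
    rw [mulVec_sub, mulVec_mulVec, hF, one_mulVec, frameThresh]
  have h := dotProduct_transpose_mulVec_self_le hF
    ((fun i => softThresh lam ((F *ᵥ x) i)) - F *ᵥ m)
  rw [← herr] at h
  simpa only [dotProduct, Pi.sub_apply, ← sq] using h

lemma meanSqError_frameThresh_le (hF : Fᵀ * F = 1) (hσ : 0 < σ) {L : ℝ} (hL : 1 / 2 ≤ L)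
    (hP : ∀ i, HasSubgaussianMGF (fun x => (F *ᵥ (x - m)) i) (σ ^ 2).toNNReal P) :
    meanSqError (frameThresh F (σ * √(2 * L))) m P ≤
      36 * L * ∑ i, min ((F *ᵥ m) i ^ 2) (σ ^ 2) +
        Fintype.card ι * (8 * σ ^ 2 * Real.exp (-L)) := by
  have hlam : 0 ≤ σ * √(2 * L) := by positivity
  have hcoeff := memLp_softThresh_mulVec hlam hP
  calc meanSqError (frameThresh F (σ * √(2 * L))) m P
      ≤ meanSqError (fun x i => softThresh (σ * √(2 * L)) ((F *ᵥ x) i)) (F *ᵥ m) P :=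
        integral_mono (integrable_sum_sq_sub (memLp_frameThresh hlam hP) m)
          (integrable_sum_sq_sub hcoeff _) fun x => sum_sq_frameThresh_sub_le hF _ x m
    _ = ∑ i, ∫ x, (softThresh (σ * √(2 * L)) ((F *ᵥ x) i) - (F *ᵥ m) i) ^ 2 ∂P :=
        meanSqError_eq_sum hcoeff _
    _ ≤ ∑ i, (36 * L * min ((F *ᵥ m) i ^ 2) (σ ^ 2) + 8 * σ ^ 2 * Real.exp (-L)) := by
        simp only [mulVec_sub, Pi.sub_apply] at hP
        gcongr with i
        exact integral_sq_softThresh_sub_le_oracle hσ hL (hP i)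
    _ = _ := by
        rw [Finset.sum_add_distrib, ← Finset.mul_sum, Finset.sum_const, Finset.card_univ,
          nsmul_eq_mul]

end FrameThresholding

section RankDecay

variable {s c σ : ℝ} {p : ℕ}

/-- The upper half of `sortedDecay`: some enumeration of the entries of `z` decays like
`c r^{-s}`, that is, `z` lies in the weak-`ℓ^{1/s}` ball of radius `c`. -/
def rankDecay (s c : ℝ) (z : Fin p → ℝ) : Prop :=
  ∃ e : Equiv.Perm (Fin p), ∀ r : Fin p, |z (e r)| ≤ c * ((r : ℝ) + 1) ^ (-s)

lemma sortedDecay.rankDecay {c₁ : ℝ} {z : Fin p → ℝ} (hz : sortedDecay s c₁ c z) :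
    rankDecay s c z :=
  let ⟨e, _, he⟩ := hz
  ⟨e, fun r => (he r).2⟩

lemma sum_Ico_add_one_rpow_neg_le {q : ℝ} (hq : 1 < q) {a b : ℕ} (ha : 0 < a) (hab : a ≤ b) :
    ∑ r ∈ Finset.Ico a b, ((r : ℝ) + 1) ^ (-q) ≤ (a : ℝ) ^ (1 - q) / (q - 1) := by
  have ha' : (0 : ℝ) < a := by exact_mod_cast ha
  have hab' : (a : ℝ) ≤ b := by exact_mod_cast hab
  have hanti : AntitoneOn (fun x : ℝ => x ^ (-q)) (Set.Icc a b) := fun x hx y _ hxy =>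
    Real.rpow_le_rpow_of_nonpos (ha'.trans_le hx.1) hxy (by linarith)
  have hzero : (0 : ℝ) ∉ Set.uIcc (a : ℝ) b := by
    rw [Set.uIcc_of_le hab']
    exact fun h => ha'.not_ge h.1
  calc ∑ r ∈ Finset.Ico a b, ((r : ℝ) + 1) ^ (-q) ≤ ∫ x in (a : ℝ)..b, x ^ (-q) := by
        simpa using hanti.sum_le_integral_Ico hab
    _ = ((a : ℝ) ^ (1 - q) - (b : ℝ) ^ (1 - q)) / (q - 1) := by
        rw [integral_rpow (.inr ⟨by linarith, hzero⟩), neg_add_eq_sub, ← neg_sub q 1, div_neg,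
          ← neg_div, neg_sub]
    _ ≤ (a : ℝ) ^ (1 - q) / (q - 1) := by
        have : 0 < q - 1 := by linarith
        gcongr
        exact sub_le_self _ (by positivity)

lemma sum_range_min_sq_rpow_le (hs : 1 / 2 < s) {N : ℕ} (hN : 0 < N) (p : ℕ) :
    ∑ r ∈ Finset.range p, min ((c * ((r : ℝ) + 1) ^ (-s)) ^ 2) (σ ^ 2) ≤
      N * σ ^ 2 + c ^ 2 / (2 * s - 1) * (N : ℝ) ^ (1 - 2 * s) := by
  have hsq (r : ℕ) : (c * ((r : ℝ) + 1) ^ (-s)) ^ 2 = c ^ 2 * ((r : ℝ) + 1) ^ (-(2 * s)) := by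
    rw [mul_pow, ← Real.rpow_mul_natCast (by positivity)]
    congr 2
    push_cast
    ring
  set M := max p N
  calc ∑ r ∈ Finset.range p, min ((c * ((r : ℝ) + 1) ^ (-s)) ^ 2) (σ ^ 2)
      ≤ ∑ r ∈ Finset.range M, min ((c * ((r : ℝ) + 1) ^ (-s)) ^ 2) (σ ^ 2) :=
        Finset.sum_le_sum_of_subset_of_nonneg (Finset.range_mono (le_max_left p N))
          fun r _ _ => by positivity
    _ ≤ ∑ _r ∈ Finset.range N, σ ^ 2 +
          ∑ r ∈ Finset.Ico N M, c ^ 2 * ((r : ℝ) + 1) ^ (-(2 * s)) := by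
        rw [← Finset.sum_range_add_sum_Ico _ (le_max_right p N)]
        gcongr with r _ r _
        · exact min_le_right _ _
        · exact (min_le_left _ _).trans_eq (hsq r)
    _ ≤ N * σ ^ 2 + c ^ 2 * ((N : ℝ) ^ (1 - 2 * s) / (2 * s - 1)) := by
        rw [Finset.sum_const, Finset.card_range, nsmul_eq_mul, ← Finset.mul_sum]
        gcongr
        exact sum_Ico_add_one_rpow_neg_le (by linarith) hN (le_max_right p N)
    _ = N * σ ^ 2 + c ^ 2 / (2 * s - 1) * (N : ℝ) ^ (1 - 2 * s) := by ring

lemma rankDecay.sum_min_sq_le_sum_range {z : Fin p → ℝ} (hz : rankDecay s c z) (σ : ℝ) :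
    ∑ i, min (z i ^ 2) (σ ^ 2) ≤
      ∑ r ∈ Finset.range p, min ((c * ((r : ℝ) + 1) ^ (-s)) ^ 2) (σ ^ 2) := by
  obtain ⟨e, he⟩ := hz
  rw [← Equiv.sum_comp e, ← Fin.sum_univ_eq_sum_range
    fun r : ℕ => min ((c * ((r : ℝ) + 1) ^ (-s)) ^ 2) (σ ^ 2)]
  refine Finset.sum_le_sum fun r _ => min_le_min_right _ ?_
  rw [← sq_abs]
  exact pow_le_pow_left₀ (abs_nonneg _) (he r) 2

lemma rankDecay.sum_min_sq_le (hs : 1 / 2 < s) (hσ : 0 < σ) {z : Fin p → ℝ}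
    (hz : rankDecay s c z) :
    ∑ i, min (z i ^ 2) (σ ^ 2) ≤ σ ^ 2 + (1 + c ^ 2 / (2 * s - 1)) * σ ^ (2 - 1 / s) := by
  have : 0 < s := by linarith
  have hs1 : 0 < 2 * s - 1 := by linarith
  -- The rank at which `r^{-s}` drops below `σ`.
  set ρ := σ ^ (-1 / s)
  have hρ : 0 < ρ := by positivity
  have hhead : ρ * σ ^ 2 = σ ^ (2 - 1 / s) := by
    rw [← Real.rpow_natCast, ← Real.rpow_add hσ]
    congr 1
    push_cast
    ring
  have htail : ρ ^ (1 - 2 * s) = σ ^ (2 - 1 / s) := by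
    rw [← Real.rpow_mul hσ.le]
    congr 1
    field_simp
    ring
  calc ∑ i, min (z i ^ 2) (σ ^ 2)
      ≤ ∑ r ∈ Finset.range p, min ((c * ((r : ℝ) + 1) ^ (-s)) ^ 2) (σ ^ 2) :=
        hz.sum_min_sq_le_sum_range σ
    _ ≤ ⌈ρ⌉₊ * σ ^ 2 + c ^ 2 / (2 * s - 1) * (⌈ρ⌉₊ : ℝ) ^ (1 - 2 * s) :=
        sum_range_min_sq_rpow_le hs (Nat.ceil_pos.2 hρ) p
    _ ≤ (ρ + 1) * σ ^ 2 + c ^ 2 / (2 * s - 1) * ρ ^ (1 - 2 * s) := by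
        have hceil := Real.rpow_le_rpow_of_nonpos hρ (Nat.le_ceil ρ)
          (show 1 - 2 * s ≤ 0 by linarith)
        gcongr
        exact (Nat.ceil_lt_add_one hρ.le).le
    _ = σ ^ 2 + (1 + c ^ 2 / (2 * s - 1)) * σ ^ (2 - 1 / s) := by
        rw [htail, add_mul, hhead]
        ring

lemma sq_le_rpow_mul_rpow {σ₀ : ℝ} (hs : 0 < s) (hσ : 0 < σ) (hσσ₀ : σ ≤ σ₀) :
    σ ^ 2 ≤ σ₀ ^ (1 / s) * σ ^ (2 - 1 / s) :=
  calc σ ^ 2 = σ ^ (1 / s) * σ ^ (2 - 1 / s) := by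
        rw [← Real.rpow_add hσ, add_sub_cancel, Real.rpow_two]
    _ ≤ σ₀ ^ (1 / s) * σ ^ (2 - 1 / s) := by gcongr

end RankDecay

theorem meanSqError_frameThresh_le_of_rankDecay {κ : Type*} [Fintype κ] [DecidableEq κ]
    {s c σ σ₀ : ℝ} (hs : 1 / 2 < s) (hσ : 0 < σ) (hσσ₀ : σ ≤ σ₀) {p : ℕ} (hp : 2 ≤ p)
    {F : Matrix (Fin p) κ ℝ} (hF : Fᵀ * F = 1) {m : κ → ℝ} (hm : rankDecay s c (F *ᵥ m))
    {P : Measure (κ → ℝ)} [IsProbabilityMeasure P]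
    (hP : ∀ i, HasSubgaussianMGF (fun x => (F *ᵥ (x - m)) i) (σ ^ 2).toNNReal P) :
    meanSqError (frameThresh F (σ * √(2 * Real.log p))) m P ≤
      36 * (1 + 2 * σ₀ ^ (1 / s) + c ^ 2 / (2 * s - 1)) * σ ^ (2 - 1 / s) * Real.log p := by
  have hp0 : (0 : ℝ) < p := by exact_mod_cast two_pos.trans_le hp
  have hlog : 1 / 2 ≤ Real.log p := by
    have := Real.log_le_log two_pos (show (2 : ℝ) ≤ p by exact_mod_cast hp)
    linarith [Real.log_two_gt_d9]
  have hrisk := meanSqError_frameThresh_le hF hσ hlog hP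
  have hfloor : (p : ℝ) * (8 * σ ^ 2 * Real.exp (-Real.log p)) = 8 * σ ^ 2 := by
    rw [Real.exp_neg, Real.exp_log hp0]
    field_simp
  have henergy : ∑ i, min ((F *ᵥ m) i ^ 2) (σ ^ 2) + σ ^ 2 ≤
      (1 + 2 * σ₀ ^ (1 / s) + c ^ 2 / (2 * s - 1)) * σ ^ (2 - 1 / s) := by
    linarith [hm.sum_min_sq_le hs hσ, sq_le_rpow_mul_rpow (one_half_pos.trans hs) hσ hσσ₀]
  rw [Fintype.card_fin, hfloor] at hrisk
  nlinarith [sq_nonneg σ, mul_le_mul_of_nonneg_left henergy (show 0 ≤ 36 * Real.log p by linarith)]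

lemma average_le_two_mul_average_add {C : ℕ} (hC : 0 < C) {x y : Fin C → ℝ} {R : ℝ}
    (h : ∀ c, x c ≤ 2 * y c + R) :
    (1 / C : ℝ) * ∑ c, x c ≤ 2 * ((1 / C : ℝ) * ∑ c, y c) + R :=
  calc (1 / C : ℝ) * ∑ c, x c ≤ (1 / C : ℝ) * ∑ c, (2 * y c + R) := by
        gcongr with c
        exact h c
    _ = 2 * ((1 / C : ℝ) * ∑ c, y c) + R := by
        rw [Finset.sum_add_distrib, ← Finset.mul_sum, Finset.sum_const, Finset.card_univ,
          Fintype.card_fin, nsmul_eq_mul]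
        field_simp

theorem within_class_variance_reduction_general (s σ₀ c₂ : ℝ) (hs : 1 / 2 < s) (hσ₀ : 0 < σ₀) :
    ∃ K > 0, ∀ p d : ℕ, 2 ≤ p → ∀ σ : ℝ, 0 < σ → σ ≤ σ₀ →
      ∀ F : Matrix (Fin p) (Fin d) ℝ, Fᵀ * F = 1 →
      ∀ C : ℕ, 0 < C →
      ∀ (Kc : Fin C → ℕ) (w : (c : Fin C) → Fin (Kc c) → ℝ)
        (μmix : (c : Fin C) → Fin (Kc c) → Fin d → ℝ),
        (∀ c k, 0 ≤ w c k) → (∀ c, ∑ k, w c k = 1) →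
        (∀ c k, rankDecay s c₂ (F *ᵥ μmix c k)) →
      ∀ P : (c : Fin C) → Fin (Kc c) → Measure (Fin d → ℝ),
        (∀ c k, IsProbabilityMeasure (P c k)) →
        (∀ c k i, HasSubgaussianMGF (fun x => (F *ᵥ (x - μmix c k)) i) (σ ^ 2).toNNReal (P c k)) →
      ∀ ν : Fin C → Measure (Fin d → ℝ), (∀ c, ν c = mixture (w c) (P c)) →
      ∀ Φ : (Fin d → ℝ) → (Fin d → ℝ), Φ = frameThresh F (σ * √(2 * Real.log p)) →
      ∀ (μcl : Fin C → Fin d → ℝ), (∀ c, μcl c = ∑ k, w c k • μmix c k) →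
      ∀ (μb : Fin C → Fin d → ℝ), (∀ c, μb c = ∫ x, Φ x ∂ν c) →
        (1 / C : ℝ) * ∑ c, meanSqError Φ (μb c) (ν c) ≤
          2 * ((1 / C : ℝ) * ∑ c, ∑ k, w c k * ∑ i, (μmix c k i - μcl c i) ^ 2) +
            K * σ ^ (2 - 1 / s) * Real.log p := by
  have hs1 : 0 < 2 * s - 1 := by linarith
  refine ⟨2 * (36 * (1 + 2 * σ₀ ^ (1 / s) + c₂ ^ 2 / (2 * s - 1))), by positivity, ?_⟩
  rintro p d hp σ hσ hσσ₀ F hF C hC Kc w μmix hw hw1 hdecay P hprob hsub ν hν Φ rfl μcl - μb hμb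
  have hlam : 0 ≤ σ * √(2 * Real.log p) := by positivity
  rw [mul_assoc 2 (36 * _), mul_assoc 2 (36 * _ * _)]
  refine average_le_two_mul_average_add hC fun c => ?_
  rw [hμb c, hν c]
  exact meanSqError_integral_mixture_le (hw c) (hw1 c) (continuous_frameThresh F hlam).measurable
    (fun k => memLp_frameThresh hlam (hsub c k))
    (fun k => meanSqError_frameThresh_le_of_rankDecay hs hσ hσσ₀ hp hF (hdecay c k) (hsub c k))
    (μcl c)

/-- Within-class variance reduction.  For Gaussian mixture classes
`ν_c = ∑_k π_{c,k} N(μ_{c,k}, σ² I_d)` whose centers all satisfy the decay condition in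
the orthogonal basis `F`, the tight frame soft-thresholding `Φ(x) = Fᵀ ρ_t(F x)` with
`λ = σ √(2 log d)` satisfies `Tr(Σ̄_W) ≤ 2 Tr(Σ_M) + K σ^{2−1/s} log d`, where
`Tr(Σ̄_W) = (1/C) ∑_c ∫ ‖Φ(x) − μ̄_c‖² dν_c` and
`Tr(Σ_M) = (1/C) ∑_{c,k} π_{c,k} ‖μ_{c,k} − μ_c‖²`. -/
theorem within_class_variance_reduction
    (s c₁ c₂ : ℝ) (hs : 1 / 2 < s) (hc₁ : 0 < c₁) (hc₂ : 0 < c₂) :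
    ∃ K > 0, ∀ d : ℕ, 4 ≤ d → ∀ σ : ℝ, 0 < σ → σ ≤ c₁ →
      ∀ F : Matrix (Fin d) (Fin d) ℝ, Fᵀ * F = 1 →
      ∀ C : ℕ, 0 < C →
      ∀ (Kc : Fin C → ℕ) (w : (c : Fin C) → Fin (Kc c) → ℝ)
        (μmix : (c : Fin C) → Fin (Kc c) → Fin d → ℝ),
        (∀ c k, 0 ≤ w c k) → (∀ c, ∑ k, w c k = 1) →
        (∀ c k, sortedDecay s c₁ c₂ (F.mulVec (μmix c k))) →
      ∀ ν : Fin C → Measure (Fin d → ℝ),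
        (∀ c, ν c = ∑ k, ENNReal.ofReal (w c k) • gaussPi d (μmix c k) σ) →
      ∀ Φ : (Fin d → ℝ) → (Fin d → ℝ),
        Φ = (fun x => Fᵀ.mulVec fun i =>
          softThresh (σ * Real.sqrt (2 * Real.log d)) (F.mulVec x i)) →
      ∀ (μcl : Fin C → Fin d → ℝ), (∀ c, μcl c = ∑ k, w c k • μmix c k) →
      ∀ (μb : Fin C → Fin d → ℝ), (∀ c, μb c = ∫ x, Φ x ∂ν c) →
        (1 / C : ℝ) * ∑ c, ∫ x, ∑ i, (Φ x i - μb c i) ^ 2 ∂ν c ≤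
          2 * ((1 / C : ℝ) * ∑ c, ∑ k, w c k * ∑ i, (μmix c k i - μcl c i) ^ 2) +
            K * σ ^ (2 - 1 / s) * Real.log d := by
  obtain ⟨K, hK, h⟩ := within_class_variance_reduction_general s c₁ c₂ hs hc₁
  exact ⟨K, hK, fun d hd σ hσ hσc F hF C hC Kc w μmix hw hw1 hdecay =>
    h d d (by omega) σ hσ hσc F hF C hC Kc w μmix hw hw1 (fun c k => (hdecay c k).rankDecay) _
      (fun c k => inferInstance) fun c k => hasSubgaussianMGF_mulVec_sub_gaussPi hF (μmix c k) σ⟩
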